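/- Let i denote the imaginary unit. Define the 2×2 complex matrices C = [[−2^{3/4}/2, −i·2^{3/4}/2],[−i·2^{1/4}/2, −2^{1/4}/2]], D = [[2^{3/4}/2, −i·2^{3/4}/2],[−i·2^{1/4}/2, 2^{1/4}/2]], E = [[2^{3/4}/2, −i·2^{3/4}/2],[−i·2^{1/4}/2, 2^{1/4}/2]], F = [[−2^{3/4}/2, −i·2^{3/4}/2],[−i·2^{1/4}/2, −2^{1/4}/2]]. Then (C⊗D⊗E⊗F)(|0000⟩ + |1111⟩) = |0000⟩ + (1/2)|1100⟩ + (1/2)|1010⟩ − (1/2)|1001⟩ − (1/2)|0110⟩ + (1/2)|0101⟩ + (1/2)|0011⟩ + (1/4)|1111⟩; in particular the 4-arity EQUAL gate |0000⟩+|1111⟩ is Pfaffian under the heterogeneous change of basis (C,D,E,F), the right-hand side being sPf of the skew-symmetric matrix with upper-triangular entries Ξ₁₂ = 1/2, Ξ₁₃ = 1/2, Ξ₁₄ = −1/2, Ξ₂₃ = −1/2, Ξ₂₄ = 1/2, Ξ₃₄ = 1/2. -/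

import Mathlib

open scoped BigOperators

noncomputable section

/-- Change of basis on an `n`-arity gate: `((A₁⊗…⊗Aₙ)G)(b) = Σ_c (∏ᵢ Aᵢ(bᵢ,cᵢ))·G(c)`. -/
def cobGate {n : ℕ} (A : Fin n → Matrix (Fin 2) (Fin 2) ℂ) (G : (Fin n → Fin 2) → ℂ) :
    (Fin n → Fin 2) → ℂ :=
  fun b => ∑ c : Fin n → Fin 2, (∏ i, A i (b i) (c i)) * G c

/-- Change of basis on an `n`-arity cogate: `C′(b) = Σ_c C(c)·∏ᵢ Aᵢ⁻¹(cᵢ,bᵢ)`. -/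
def cobCogate {n : ℕ} (A : Fin n → Matrix (Fin 2) (Fin 2) ℂ) (C : (Fin n → Fin 2) → ℂ) :
    (Fin n → Fin 2) → ℂ :=
  fun b => ∑ c : Fin n → Fin 2, C c * ∏ i, (A i)⁻¹ (c i) (b i)

/-- The standard basis vector (ket/bra) at the bitstring `v`. -/
def ket {n : ℕ} (v : Fin n → Fin 2) : (Fin n → Fin 2) → ℂ :=
  fun b => if b = v then 1 else 0

/-- The support of a bitstring. -/
def supp {n : ℕ} (b : Fin n → Fin 2) : Finset (Fin n) :=
  Finset.univ.filter fun i => b i = 1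

/-- Fuel-driven Laplace expansion of the Pfaffian of a principal submatrix. -/
def subPfAux {n : ℕ} (Ξ : Matrix (Fin n) (Fin n) ℂ) : ℕ → Finset (Fin n) → ℂ
  | 0, I => if I = ∅ then 1 else 0
  | fuel + 1, I =>
    if hI : I.Nonempty then
      if Odd I.card then 0
      else
        ∑ i ∈ I.erase (I.min' hI),
          (-1 : ℂ) ^ (I.filter fun j => j ≤ i).card * Ξ (I.min' hI) i *
            subPfAux Ξ fuel ((I.erase (I.min' hI)).erase i)
    else 1

/-- `subPf Ξ I` is the Pfaffian `Pf(Ξ|_I)` of the principal submatrix of `Ξ` on the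
rows and columns in `I` (`1` on the empty set, `0` for odd `|I|`). -/
def subPf {n : ℕ} (Ξ : Matrix (Fin n) (Fin n) ℂ) (I : Finset (Fin n)) : ℂ :=
  subPfAux Ξ I.card I

/-- The sub-Pfaffian vector: coordinate `Pf(Ξ|_I)` at the bitstring with support `I`. -/
def sPf {n : ℕ} (Ξ : Matrix (Fin n) (Fin n) ℂ) : (Fin n → Fin 2) → ℂ :=
  fun b => subPf Ξ (supp b)

/-- The dual sub-Pfaffian vector: coordinate `Pf(Θ|_{Jᶜ})` at the bitstring with support `J`. -/
def sPfStar {n : ℕ} (Θ : Matrix (Fin n) (Fin n) ℂ) : (Fin n → Fin 2) → ℂ :=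
  fun b => subPf Θ (supp b)ᶜ

/-- A matrix is skew-symmetric. -/
def IsSkew {n : ℕ} (Ξ : Matrix (Fin n) (Fin n) ℂ) : Prop :=
  ∀ i j, Ξ j i = -Ξ i j

/-- A gate is Pfaffian under the change of basis `M`. -/
def IsPfaffGate {n : ℕ} (M : Fin n → Matrix (Fin 2) (Fin 2) ℂ) (G : (Fin n → Fin 2) → ℂ) : Prop :=
  ∃ (α : ℂ) (Ξ : Matrix (Fin n) (Fin n) ℂ), IsSkew Ξ ∧ cobGate M G = fun b => α * sPf Ξ b

/-- A cogate is Pfaffian under the change of basis `M`. -/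
def IsPfaffCogate {n : ℕ} (M : Fin n → Matrix (Fin 2) (Fin 2) ℂ) (C : (Fin n → Fin 2) → ℂ) : Prop :=
  ∃ (β : ℂ) (Θ : Matrix (Fin n) (Fin n) ℂ), IsSkew Θ ∧ cobCogate M C = fun b => β * sPfStar Θ b

/-- `2^(3/4)` as a complex number. -/
def r34 : ℂ := ((2 : ℝ) ^ ((3 : ℝ)/4) : ℝ)
/-- `2^(1/4)` as a complex number. -/
def r14 : ℂ := ((2 : ℝ) ^ ((1 : ℝ)/4) : ℝ)

def mC : Matrix (Fin 2) (Fin 2) ℂ :=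
  !![-(r34/2), -Complex.I * (r34/2); -Complex.I * (r14/2), -(r14/2)]
def mD : Matrix (Fin 2) (Fin 2) ℂ :=
  !![r34/2, -Complex.I * (r34/2); -Complex.I * (r14/2), r14/2]
def mE : Matrix (Fin 2) (Fin 2) ℂ :=
  !![r34/2, -Complex.I * (r34/2); -Complex.I * (r14/2), r14/2]
def mF : Matrix (Fin 2) (Fin 2) ℂ :=
  !![-(r34/2), -Complex.I * (r34/2); -Complex.I * (r14/2), -(r14/2)]

def xiEq4 : Matrix (Fin 4) (Fin 4) ℂ :=
  !![0, 1/2, 1/2, -(1/2);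
     -(1/2), 0, -(1/2), 1/2;
     -(1/2), 1/2, 0, 1/2;
     1/2, -(1/2), -(1/2), 0]

/-! Split each product `∏ i, A i (b i) j` along the support `S` of `b`. All four matrices have the
form `diag(a, c) * [[ε, -I], [-I, ε]]` with `ε = ±1`, so the coordinate of the image of EQUAL at
`b` is a multiple of `∏ i ∈ S, ε i` by the factor `I ^ |S| + (-I) ^ |S|`, which vanishes for odd
`|S|` and is `2 * (-1) ^ (|S| / 2)` for even `|S|`.

These coordinates are Pfaffians: if `Ξ i j = t * ε i * ε j` above the diagonal, every term of the
Laplace expansion of `Pf(Ξ|_S)` equals `t ^ (|S| / 2) * ∏ i ∈ S, ε i` up to an alternating sign,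
and the signs add up to `1`. The signs `(-1, 1, 1, -1)` and `t = -1/2` give the theorem. -/

lemma sum_neg_one_pow_card_filter_le {ι R : Type*} [LinearOrder ι] [Ring R] (s : Finset ι) :
    ∑ i ∈ s, (-1 : R) ^ (s.filter (· ≤ i)).card = if Even s.card then 0 else -1 := by
  induction s using Finset.induction_on_max with
  | empty => simp
  | insert m s hlt ih =>
    have hm : m ∉ s := fun h => (hlt m h).false
    have hold : ∀ i ∈ s, (insert m s).filter (· ≤ i) = s.filter (· ≤ i) := fun i hi => by
      rw [Finset.filter_insert, if_neg (hlt i hi).not_ge]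
    have hnew : (insert m s).filter (· ≤ m) = insert m s :=
      Finset.filter_true_of_mem fun i hi =>
        (Finset.mem_insert.mp hi).elim le_of_eq fun h => (hlt i h).le
    rw [Finset.sum_insert hm, hnew, Finset.card_insert_of_notMem hm,
      Finset.sum_congr rfl fun i hi => by rw [hold i hi], ih]
    by_cases hs : Even s.card
    · simp [hs, Nat.even_add_one, pow_succ]
    · simp [hs, Nat.even_add_one, pow_succ, (Nat.not_even_iff_odd.mp hs).neg_one_pow]

lemma sum_erase_min'_neg_one_pow {ι R : Type*} [LinearOrder ι] [Ring R] {s : Finset ι}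
    (hs : s.Nonempty) (heven : Even s.card) :
    ∑ i ∈ s.erase (s.min' hs), (-1 : R) ^ (s.filter (· ≤ i)).card = 1 := by
  have hmin : s.filter (· ≤ s.min' hs) = {s.min' hs} :=
    Finset.eq_singleton_iff_unique_mem.mpr
      ⟨Finset.mem_filter.mpr ⟨s.min'_mem hs, le_rfl⟩, fun i hi =>
        (Finset.mem_filter.mp hi).2.antisymm (s.min'_le i (Finset.mem_filter.mp hi).1)⟩
  have hsum := sum_neg_one_pow_card_filter_le (R := R) s
  rw [← Finset.add_sum_erase _ _ (s.min'_mem hs), hmin, Finset.card_singleton, pow_one,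
    if_pos heven] at hsum
  exact (neg_add_eq_zero.mp hsum).symm

section Pfaffian

variable {n : ℕ} {Ξ : Matrix (Fin n) (Fin n) ℂ} {t : ℂ} {u : Fin n → ℂ}

lemma subPf_of_odd_card (Ξ : Matrix (Fin n) (Fin n) ℂ) {I : Finset (Fin n)} (hI : Odd I.card) :
    subPf Ξ I = 0 := by
  have hne : I.Nonempty := Finset.card_pos.mp hI.pos
  obtain ⟨k, hk⟩ := hI
  simp [subPf, subPfAux, hk, hne]

lemma subPfAux_of_upper_eq_mul (hΞ : ∀ i j, i < j → Ξ i j = t * u i * u j) {m k : ℕ} (hmk : m ≤ k)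
    {I : Finset (Fin n)} (hI : I.card = 2 * m) :
    subPfAux Ξ k I = t ^ m * ∏ i ∈ I, u i := by
  induction m generalizing k I with
  | zero =>
    obtain rfl : I = ∅ := Finset.card_eq_zero.mp hI
    cases k <;> simp [subPfAux]
  | succ m ih =>
    obtain ⟨k, rfl⟩ : ∃ l, k = l + 1 := ⟨k - 1, by omega⟩
    have hne : I.Nonempty := Finset.card_pos.mp (by omega)
    have heven : Even I.card := ⟨m + 1, by omega⟩
    let p := I.min' hne
    have hterm : ∀ i ∈ I.erase p,
        Ξ p i * subPfAux Ξ k ((I.erase p).erase i) = t ^ (m + 1) * ∏ j ∈ I, u j := by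
      intro i hi
      have hcard : ((I.erase p).erase i).card = 2 * m := by
        rw [Finset.card_erase_of_mem hi, Finset.card_erase_of_mem (I.min'_mem hne), hI]
        omega
      rw [hΞ p i (I.min'_lt_of_mem_erase_min' hne hi), ih (by omega) hcard,
        ← Finset.mul_prod_erase I u (I.min'_mem hne), ← Finset.mul_prod_erase _ u hi]
      ring
    calc subPfAux Ξ (k + 1) I
        = ∑ i ∈ I.erase p, (-1) ^ (I.filter (· ≤ i)).card * Ξ p i *
            subPfAux Ξ k ((I.erase p).erase i) := by
          rw [subPfAux, dif_pos hne, if_neg (Nat.not_odd_iff_even.mpr heven)]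
      _ = (∑ i ∈ I.erase p, (-1) ^ (I.filter (· ≤ i)).card) * (t ^ (m + 1) * ∏ j ∈ I, u j) := by
          rw [Finset.sum_mul]
          exact Finset.sum_congr rfl fun i hi => by rw [mul_assoc, hterm i hi]
      _ = t ^ (m + 1) * ∏ j ∈ I, u j := by
          rw [sum_erase_min'_neg_one_pow hne heven, one_mul]

lemma subPf_of_upper_eq_mul (hΞ : ∀ i j, i < j → Ξ i j = t * u i * u j) {I : Finset (Fin n)}
    (hI : Even I.card) : subPf Ξ I = t ^ (I.card / 2) * ∏ i ∈ I, u i :=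
  subPfAux_of_upper_eq_mul hΞ (Nat.div_le_self _ _) (Nat.two_mul_div_two_of_even hI).symm

end Pfaffian

lemma prod_compl_of_sq_eq_one {ι M : Type*} [Fintype ι] [DecidableEq ι] [CommMonoid M] {f : ι → M}
    (hsq : ∀ i, f i ^ 2 = 1) (s : Finset ι) : ∏ i ∈ sᶜ, f i = (∏ i, f i) * ∏ i ∈ s, f i := by
  have hs : (∏ i ∈ s, f i) * ∏ i ∈ s, f i = 1 := by
    simp only [← sq, ← Finset.prod_pow, hsq, Finset.prod_const_one]
  rw [← Finset.prod_compl_mul_prod s, mul_assoc, hs, mul_one]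

section Gates

variable {n : ℕ}

lemma eq_sum_ket_of_odd_eq_zero {G : (Fin n → Fin 2) → ℂ}
    (hG : ∀ b, Odd (supp b).card → G b = 0) (b : Fin n → Fin 2) :
    G b = ∑ v with Even (supp v).card, G v * ket v b := by
  by_cases hb : Even (supp b).card
  · simp [ket, hb]
  · simp [ket, hb, hG b (Nat.not_even_iff_odd.mp hb)]

/-- The `n`-arity EQUAL gate `|0…0⟩ + |1…1⟩`. -/
def equalGate (n : ℕ) : (Fin n → Fin 2) → ℂ := ket 0 + ket 1

lemma cobGate_equalGate (A : Fin n → Matrix (Fin 2) (Fin 2) ℂ) (b : Fin n → Fin 2) :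
    cobGate A (equalGate n) b = ∏ i, A i (b i) 0 + ∏ i, A i (b i) 1 := by
  simp [cobGate, equalGate, ket, mul_add, Finset.sum_add_distrib]

lemma prod_apply_eq_prod_supp_mul_prod_compl {M : Type*} [CommMonoid M] (f : Fin n → Fin 2 → M)
    (b : Fin n → Fin 2) :
    ∏ i, f i (b i) = (∏ i ∈ supp b, f i 1) * ∏ i ∈ (supp b)ᶜ, f i 0 := by
  rw [← Finset.prod_mul_prod_compl (supp b)]
  congr 1
  · exact Finset.prod_congr rfl fun i hi => by rw [(Finset.mem_filter.mp hi).2]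
  · refine Finset.prod_congr rfl fun i hi => ?_
    have hbi : b i ≠ 1 := by simpa [supp] using hi
    rw [show b i = 0 by omega]

/-- The change of basis `diag(a, c) * [[ε, -I], [-I, ε]]`, the common shape of `mC`, `mD`,
`mE`, `mF`; the sign `ε` is encoded as a complex number. -/
def signBasis (a c ε : ℂ) : Matrix (Fin 2) (Fin 2) ℂ :=
  !![ε * a, -Complex.I * a; -Complex.I * c, ε * c]

variable {ε : Fin n → ℂ}

lemma cobGate_signBasis_equalGate (hsq : ∀ i, ε i ^ 2 = 1)
    (hprod : ∏ i, ε i = (-Complex.I) ^ n) (a c : ℂ) (b : Fin n → Fin 2) :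
    cobGate (fun i => signBasis a c (ε i)) (equalGate n) b =
      (-Complex.I) ^ n * (∏ i ∈ supp b, ε i) * (c ^ (supp b).card * a ^ (supp b)ᶜ.card) *
        (Complex.I ^ (supp b).card + (-Complex.I) ^ (supp b).card) := by
  have hI : (-Complex.I) ^ (supp b)ᶜ.card = (-Complex.I) ^ n * Complex.I ^ (supp b).card := by
    have hn : (supp b)ᶜ.card + (supp b).card = n := by
      rw [Finset.card_compl_add_card, Fintype.card_fin]
    calc (-Complex.I) ^ (supp b)ᶜ.card
        = (-Complex.I) ^ (supp b)ᶜ.card * (-Complex.I * Complex.I) ^ (supp b).card := by simp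
      _ = (-Complex.I) ^ n * Complex.I ^ (supp b).card := by
          rw [mul_pow, ← mul_assoc, ← pow_add, hn]
  rw [cobGate_equalGate,
    prod_apply_eq_prod_supp_mul_prod_compl fun i x => signBasis a c (ε i) x 0,
    prod_apply_eq_prod_supp_mul_prod_compl fun i x => signBasis a c (ε i) x 1]
  simp only [signBasis, Matrix.of_apply, Matrix.cons_val_zero, Matrix.cons_val_one,
    Finset.prod_mul_distrib, Finset.prod_const, prod_compl_of_sq_eq_one hsq, hprod, hI]
  ring

lemma I_pow_add_neg_I_pow_two_mul (m : ℕ) :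
    Complex.I ^ (2 * m) + (-Complex.I) ^ (2 * m) = 2 * (-1) ^ m := by
  rw [pow_mul, pow_mul, neg_sq, Complex.I_sq, two_mul]

theorem cobGate_signBasis_equalGate_eq_sPf {a c t : ℂ} {Ξ : Matrix (Fin n) (Fin n) ℂ}
    (hsq : ∀ i, ε i ^ 2 = 1) (hprod : ∏ i, ε i = (-Complex.I) ^ n)
    (hac : c ^ 2 = -t * a ^ 2) (hΞ : ∀ i j, i < j → Ξ i j = t * ε i * ε j) :
    cobGate (fun i => signBasis a c (ε i)) (equalGate n) =
      fun b => 2 * (-Complex.I) ^ n * a ^ n * sPf Ξ b := by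
  ext b
  rw [cobGate_signBasis_equalGate hsq hprod, sPf]
  rcases Nat.even_or_odd (supp b).card with heven | hodd
  · rw [subPf_of_upper_eq_mul hΞ heven]
    obtain ⟨m, hm⟩ := heven.two_dvd
    have hscale : c ^ (2 * m) * a ^ (supp b)ᶜ.card = (-t) ^ m * a ^ n := by
      have hn : 2 * m + (supp b)ᶜ.card = n := by
        rw [← hm, Finset.card_add_card_compl, Fintype.card_fin]
      rw [pow_mul, hac, mul_pow, ← pow_mul, mul_assoc, ← pow_add, hn]
    rw [hm, hscale, I_pow_add_neg_I_pow_two_mul, Nat.mul_div_cancel_left m two_pos]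
    have hsign : (-1) ^ m * (-t) ^ m = t ^ m := by rw [← mul_pow, neg_one_mul, neg_neg]
    linear_combination 2 * (-Complex.I) ^ n * (∏ i ∈ supp b, ε i) * a ^ n * hsign
  · rw [subPf_of_odd_card Ξ hodd, hodd.neg_pow, add_neg_cancel, mul_zero, mul_zero]

end Gates

lemma r14_pow_four : r14 ^ 4 = 2 := by
  rw [r14, ← Complex.ofReal_pow, ← Real.rpow_mul_natCast zero_le_two]
  norm_num

lemma r34_eq_r14_pow_three : r34 = r14 ^ 3 := by
  rw [r34, r14, ← Complex.ofReal_pow, ← Real.rpow_mul_natCast zero_le_two]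
  norm_num

/-- The signs for which `mC`, `mD`, `mE`, `mF` are instances of `signBasis`. -/
def signs : Fin 4 → ℂ := ![-1, 1, 1, -1]

lemma basis_eq_signBasis :
    ![mC, mD, mE, mF] = fun i => signBasis (r34 / 2) (r14 / 2) (signs i) := by
  funext i
  fin_cases i <;> simp [mC, mD, mE, mF, signBasis, signs]

lemma xiEq4_of_lt (i j : Fin 4) (hij : i < j) : xiEq4 i j = -(1 / 2) * signs i * signs j := by
  fin_cases i <;> fin_cases j <;> simp [xiEq4, signs] at hij ⊢

lemma equalGate_four : equalGate 4 = ket ![0,0,0,0] + ket ![1,1,1,1] := by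
  rw [equalGate, show (0 : Fin 4 → Fin 2) = ![0,0,0,0] by decide,
    show (1 : Fin 4 → Fin 2) = ![1,1,1,1] by decide]

lemma cobGate_equal_eq_sPf_xiEq4 :
    cobGate ![mC, mD, mE, mF] (ket ![0,0,0,0] + ket ![1,1,1,1]) = sPf xiEq4 := by
  have hsq : ∀ i, signs i ^ 2 = 1 := by intro i; fin_cases i <;> simp [signs]
  have hprod : ∏ i, signs i = (-Complex.I) ^ 4 := by
    rw [Even.neg_pow (by decide), Complex.I_pow_four]
    simp [signs, Fin.prod_univ_four]
  have hratio : (r14 / 2) ^ 2 = -(-(1 / 2)) * (r34 / 2) ^ 2 := by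
    rw [r34_eq_r14_pow_three]
    linear_combination -r14 ^ 2 / 8 * r14_pow_four
  have hscale : 2 * (-Complex.I) ^ 4 * (r34 / 2) ^ 4 = 1 := by
    have hr34 : r34 ^ 4 = 8 := by
      rw [r34_eq_r14_pow_three, ← pow_mul, mul_comm, pow_mul, r14_pow_four]
      norm_num
    rw [div_pow, hr34, Even.neg_pow (by decide), Complex.I_pow_four]
    norm_num
  rw [← equalGate_four, basis_eq_signBasis,
    cobGate_signBasis_equalGate_eq_sPf hsq hprod hratio xiEq4_of_lt]
  simp only [hscale, one_mul]

lemma filter_even_card_supp_four :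
    ({v | Even (supp v).card} : Finset (Fin 4 → Fin 2)) =
      {![0,0,0,0], ![1,1,0,0], ![1,0,1,0], ![1,0,0,1],
        ![0,1,1,0], ![0,1,0,1], ![0,0,1,1], ![1,1,1,1]} := by
  decide

lemma sPf_xiEq4_of_even {v : Fin 4 → Fin 2} (hv : Even (supp v).card) :
    sPf xiEq4 v = (-(1 / 2)) ^ ((supp v).card / 2) * ∏ i ∈ supp v, signs i :=
  subPf_of_upper_eq_mul xiEq4_of_lt hv

lemma sPf_xiEq4_eq_ket_expansion (b : Fin 4 → Fin 2) :
    sPf xiEq4 b = ket ![0,0,0,0] b + (1/2 : ℂ) * ket ![1,1,0,0] b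
        + (1/2 : ℂ) * ket ![1,0,1,0] b - (1/2 : ℂ) * ket ![1,0,0,1] b
        - (1/2 : ℂ) * ket ![0,1,1,0] b + (1/2 : ℂ) * ket ![0,1,0,1] b
        + (1/2 : ℂ) * ket ![0,0,1,1] b + (1/4 : ℂ) * ket ![1,1,1,1] b := by
  obtain ⟨h0000, h1100, h1010, h1001, h0110, h0101, h0011, h1111⟩ :
      sPf xiEq4 ![0,0,0,0] = 1 ∧ sPf xiEq4 ![1,1,0,0] = 1 / 2 ∧
      sPf xiEq4 ![1,0,1,0] = 1 / 2 ∧ sPf xiEq4 ![1,0,0,1] = -(1 / 2) ∧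
      sPf xiEq4 ![0,1,1,0] = -(1 / 2) ∧ sPf xiEq4 ![0,1,0,1] = 1 / 2 ∧
      sPf xiEq4 ![0,0,1,1] = 1 / 2 ∧ sPf xiEq4 ![1,1,1,1] = (1 / 2) ^ 2 := by
    refine ⟨?_, ?_, ?_, ?_, ?_, ?_, ?_, ?_⟩ <;> rw [sPf_xiEq4_of_even (by decide)] <;>
      simp [signs, supp, Finset.prod_filter, Finset.card_filter, Fin.prod_univ_four,
        Fin.sum_univ_four, -Finset.sum_boole]
  rw [eq_sum_ket_of_odd_eq_zero (G := sPf xiEq4) (fun v hv => subPf_of_odd_card xiEq4 hv) b,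
    filter_even_card_supp_four]
  repeat rw [Finset.sum_insert (by decide)]
  rw [Finset.sum_singleton, h0000, h1100, h1010, h1001, h0110, h0101, h0011, h1111]
  ring

/-- Example 6.2: the 4-arity EQUAL gate is Pfaffian under `(C,D,E,F)`. -/
theorem stmt18 :
    (cobGate ![mC, mD, mE, mF] (ket ![0,0,0,0] + ket ![1,1,1,1]) =
      fun b => ket ![0,0,0,0] b + (1/2 : ℂ) * ket ![1,1,0,0] b
        + (1/2 : ℂ) * ket ![1,0,1,0] b - (1/2 : ℂ) * ket ![1,0,0,1] b
        - (1/2 : ℂ) * ket ![0,1,1,0] b + (1/2 : ℂ) * ket ![0,1,0,1] b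
        + (1/2 : ℂ) * ket ![0,0,1,1] b + (1/4 : ℂ) * ket ![1,1,1,1] b) ∧
    cobGate ![mC, mD, mE, mF] (ket ![0,0,0,0] + ket ![1,1,1,1]) =
      fun b => sPf xiEq4 b := by
  have hsPf := cobGate_equal_eq_sPf_xiEq4
  exact ⟨hsPf.trans (funext sPf_xiEq4_eq_ket_expansion), hsPf⟩
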